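/- Assume the LAG setup, and in addition: 𝓛 attains its infimum 𝓛* := inf 𝓛 and satisfies the Polyak–Łojasiewicz condition with constant μ > 0, i.e. 2μ(𝓛(θ) − 𝓛*) ≤ ‖∇𝓛(θ)‖² for all θ ∈ E; the condition number κ := L/μ satisfies D ≤ κ; the parameters are ξ_d = ξ for all d with 0 < ξ < 1/D, α = (1 − √(Dξ))/L, and β_d = (D − d + 1)ξ/(2α√(Dξ)) for d = 1, …, D. Then for every ε ∈ (0, 1) and every integer K with K − 1 ≥ (κ/(1 − √(Dξ))) · log(1/ε), one has 𝓛(θ^K) − 𝓛* ≤ ε · V^1. -/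

import Mathlib

open Finset

lemma lag_descent {n : ℕ} (f : EuclideanSpace ℝ (Fin n) → ℝ) (hf : Differentiable ℝ f)
    (L : ℝ) (hs : ∀ x y, ‖gradient f x - gradient f y‖ ≤ L * ‖x - y‖)
    (x v : EuclideanSpace ℝ (Fin n)) :
    f (x + v) ≤ f x + inner ℝ (gradient f x) v + L / 2 * ‖v‖ ^ 2 := by
  have hd : ∀ t : ℝ, HasDerivAt (fun t : ℝ => f (x + t • v) - t * inner ℝ (gradient f x) v
      - L / 2 * t ^ 2 * ‖v‖ ^ 2)
      (inner ℝ (gradient f (x + t • v)) v - inner ℝ (gradient f x) v - L * t * ‖v‖ ^ 2) t := by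
    intro t
    have h1 : HasDerivAt (fun t : ℝ => x + t • v) v t := by
      simpa using ((hasDerivAt_id t).smul_const v).const_add x
    have h2 := (hf (x + t • v)).hasGradientAt.hasFDerivAt.comp_hasDerivAt t h1
    have h2' : HasDerivAt (fun t : ℝ => f (x + t • v)) (inner ℝ (gradient f (x + t • v)) v) t := by
      simpa [Function.comp_def] using h2
    have h3 : HasDerivAt (fun t : ℝ => t * inner ℝ (gradient f x) v)
        (inner ℝ (gradient f x) v) t := by
      simpa using (hasDerivAt_id t).mul_const (inner ℝ (gradient f x) v)
    have h4 : HasDerivAt (fun t : ℝ => L / 2 * t ^ 2 * ‖v‖ ^ 2) (L * t * ‖v‖ ^ 2) t := by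
      have := ((hasDerivAt_pow 2 t).const_mul (L / 2)).mul_const (‖v‖ ^ 2)
      refine this.congr_deriv ?_
      push_cast
      ring
    exact (h2'.sub h3).sub h4
  have hanti := antitoneOn_of_deriv_nonpos (convex_Icc (0 : ℝ) 1)
    (f := fun t : ℝ => f (x + t • v) - t * inner ℝ (gradient f x) v
      - L / 2 * t ^ 2 * ‖v‖ ^ 2)
    (fun t _ => (hd t).continuousAt.continuousWithinAt)
    (fun t _ => (hd t).differentiableAt.differentiableWithinAt)
    (by
      intro t ht
      rw [interior_Icc] at ht
      rw [(hd t).deriv, ← inner_sub_left]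
      have h1 := real_inner_le_norm (gradient f (x + t • v) - gradient f x) v
      have h2 := hs (x + t • v) x
      rw [add_sub_cancel_left, norm_smul, Real.norm_of_nonneg ht.1.le] at h2
      have h3 := mul_le_mul_of_nonneg_right h2 (norm_nonneg v)
      nlinarith)
  have := hanti (show (0 : ℝ) ∈ Set.Icc (0 : ℝ) 1 by simp) (show (1 : ℝ) ∈ Set.Icc (0 : ℝ) 1 by simp)
    zero_le_one
  simp only [one_smul, zero_smul, add_zero] at this
  linarith

lemma lag_sum_bound (D : ℕ) (ξ0 s α c : ℝ) (hs0 : 0 < s) (hα : 0 < α)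
    (hξ : 0 < ξ0) (hc0 : 0 ≤ c) (hs : s ^ 2 = D * ξ0) (hc : c * D ≤ 1 - s) (a : ℕ → ℝ) (ha : ∀ i, 0 ≤ a i) :
    (∑ i ∈ range D, ((D : ℝ) - i) * ξ0 / (2 * α * s) * a i)
      + 1 / (2 * α) * ∑ i ∈ range D, ξ0 * a (i + 1)
      ≤ s / (2 * α) * a 0
        + (1 - c) * ∑ i ∈ range D, ((D : ℝ) - i) * ξ0 / (2 * α * s) * a (i + 1) := by
  have h1 := Finset.sum_range_succ (fun i : ℕ => ((D : ℝ) - i) * ξ0 / (2 * α * s) * a i) D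
  have h2 := Finset.sum_range_succ' (fun i : ℕ => ((D : ℝ) - i) * ξ0 / (2 * α * s) * a i) D
  have h3 : ((D : ℝ) - (0 : ℕ)) * ξ0 / (2 * α * s) = s / (2 * α) := by
    field_simp
    push_cast
    linarith
  rw [h3] at h2
  simp only [sub_self, zero_mul, zero_div, add_zero] at h1
  rw [← h1, h2, Finset.mul_sum, Finset.mul_sum, add_right_comm, ← Finset.sum_add_distrib, add_comm]
  gcongr with i hi
  rw [← mul_assoc, ← mul_assoc, ← add_mul]
  refine mul_le_mul_of_nonneg_right ?_ (ha _)
  have hcd : c * (D - i) ≤ 1 - s := by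
    have : 0 ≤ c * (i : ℝ) := by positivity
    linarith
  have key : (1 - c) * (((D : ℝ) - i) * ξ0 / (2 * α * s))
      - (((D : ℝ) - ((i + 1 : ℕ) : ℝ)) * ξ0 / (2 * α * s) + 1 / (2 * α) * ξ0)
      = ξ0 / (2 * α * s) * (1 - s - c * (D - i)) := by
    push_cast
    field_simp
    ring
  have : 0 ≤ ξ0 / (2 * α * s) * (1 - s - c * (D - i)) :=
    mul_nonneg (by positivity) (by linarith)
  linarith

/-- Iteration complexity bound (equation (18)): after
`K − 1 ≥ (κ/(1 − √(Dξ))) log(1/ε)` iterations the optimality gap is at most `ε V¹`. -/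
theorem lag_iteration_complexity {n : ℕ}
    (M D : ℕ) (hM : 1 ≤ M) (hD : 1 ≤ D)
    (Lf : Fin M → EuclideanSpace ℝ (Fin n) → ℝ)
    (hdiff : ∀ m, Differentiable ℝ (Lf m))
    (L : ℝ) (hL : 0 < L)
    (hsmooth : ∀ x y, ‖gradient (fun z => ∑ m, Lf m z) x
        - gradient (fun z => ∑ m, Lf m z) y‖ ≤ L * ‖x - y‖)
    (μ : ℝ) (hμ : 0 < μ)
    (Lstar : ℝ)
    (hinf : ∀ x, Lstar ≤ ∑ m, Lf m x)
    (hattain : ∃ x, (∑ m, Lf m x) = Lstar)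
    (hPL : ∀ x, 2 * μ * ((∑ m, Lf m x) - Lstar)
      ≤ ‖gradient (fun z => ∑ m, Lf m z) x‖ ^ 2)
    (hκ : (D : ℝ) ≤ L / μ)
    (ξ0 : ℝ) (hξ0 : 0 < ξ0) (hξ0D : ξ0 < 1 / (D : ℝ))
    (ξ : ℕ → ℝ) (hξ : ∀ d ∈ Finset.Icc 1 D, ξ d = ξ0)
    (α : ℝ) (hα : α = (1 - Real.sqrt ((D : ℝ) * ξ0)) / L)
    (β : ℕ → ℝ)
    (hβ : ∀ d ∈ Finset.Icc 1 D,
      β d = ((D : ℝ) - (d : ℝ) + 1) * ξ0 / (2 * α * Real.sqrt ((D : ℝ) * ξ0)))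
    (hβD : β (D + 1) = 0)
    (θ : ℤ → EuclideanSpace ℝ (Fin n))
    (hpast : ∀ k : ℤ, k ≤ 1 → θ k = θ 1)
    (Mc : ℤ → Finset (Fin M))
    (θhat : ℤ → Fin M → EuclideanSpace ℝ (Fin n))
    (hhat0 : ∀ m, θhat 0 m = θ 1)
    (hhat : ∀ k : ℤ, 1 ≤ k → ∀ m : Fin M,
      (m ∈ Mc k → θhat k m = θhat (k - 1) m) ∧ (m ∉ Mc k → θhat k m = θ k))
    (hupd : ∀ k : ℤ, 1 ≤ k →
      θ (k + 1) = θ k - α • ∑ m, gradient (Lf m) (θhat k m))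
    (htrig : ∀ k : ℤ, 1 ≤ k → ∀ m ∈ Mc k,
      ‖gradient (Lf m) (θhat k m) - gradient (Lf m) (θ k)‖ ^ 2
        ≤ (1 / (α ^ 2 * (M : ℝ) ^ 2)) *
            ∑ d ∈ Finset.Icc 1 D, ξ d * ‖θ (k + 1 - (d : ℤ)) - θ (k - (d : ℤ))‖ ^ 2)
    (V : ℤ → ℝ)
    (hV : ∀ k : ℤ, V k = (∑ m, Lf m (θ k)) - Lstar
      + ∑ d ∈ Finset.Icc 1 D, β d * ‖θ (k + 1 - (d : ℤ)) - θ (k - (d : ℤ))‖ ^ 2) :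
    ∀ ε : ℝ, 0 < ε → ε < 1 → ∀ K : ℤ,
      (K : ℝ) - 1 ≥ ((L / μ) / (1 - Real.sqrt ((D : ℝ) * ξ0))) * Real.log (1 / ε) →
      (∑ m, Lf m (θ K)) - Lstar ≤ ε * V 1 := by
  have hD0 : (0 : ℝ) < D := by exact_mod_cast hD
  have hM0 : (0 : ℝ) < M := by exact_mod_cast hM
  set s := Real.sqrt ((D : ℝ) * ξ0) with hsdef
  have hs0 : 0 < s := Real.sqrt_pos.mpr (by positivity)
  have hs2 : s ^ 2 = D * ξ0 := Real.sq_sqrt (by positivity)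
  have hs1 : s < 1 := by
    have : ξ0 * D < 1 := (lt_div_iff₀ hD0).mp hξ0D
    nlinarith
  have hα0 : 0 < α := by rw [hα]; exact div_pos (by linarith) hL
  have hLα : L * α = 1 - s := by rw [hα]; field_simp
  have hDμ : D * μ ≤ L := (le_div_iff₀ hμ).mp hκ
  have hcD : α * μ * D ≤ 1 - s := by
    have := mul_le_mul_of_nonneg_left hDμ hα0.le
    linarith
  have hc1 : α * μ ≤ 1 := by
    have : (1 : ℝ) ≤ D := by exact_mod_cast hD
    have : α * μ * 1 ≤ α * μ * D := mul_le_mul_of_nonneg_left this (by positivity)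
    linarith
  set f : EuclideanSpace ℝ (Fin n) → ℝ := fun z => ∑ m, Lf m z with hf
  have hfd : Differentiable ℝ f := by
    rw [hf]; fun_prop
  have hgrad : ∀ x, gradient f x = ∑ m, gradient (Lf m) x := by
    intro x
    refine HasGradientAt.gradient ?_
    rw [hasGradientAt_iff_hasFDerivAt, map_sum]
    exact HasFDerivAt.fun_sum fun m _ => (hdiff m x).hasGradientAt.hasFDerivAt
  have hV' : ∀ k : ℤ, V k = f (θ k) - Lstar + ∑ i ∈ range D, ((D : ℝ) - i) * ξ0 / (2 * α * s)
      * ‖θ (k - (i : ℤ)) - θ (k - 1 - (i : ℤ))‖ ^ 2 := by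
    intro k
    rw [hV k]
    congr 1
    rw [Finset.range_eq_Ico, ← Finset.Ico_add_one_right_eq_Icc,
      Finset.sum_Ico_eq_sum_range, Finset.range_eq_Ico]
    refine Finset.sum_congr (by simp) fun i hi => ?_
    have hi' : i < D := by simpa using hi
    rw [hβ (1 + i) (by simp; omega)]
    rw [show (k + 1 - ((1 + i : ℕ) : ℤ)) = k - (i : ℤ) by push_cast; ring,
      show (k - ((1 + i : ℕ) : ℤ)) = k - 1 - (i : ℤ) by push_cast; ring,
      show ((D : ℝ) - ((1 + i : ℕ) : ℝ) + 1) = (D : ℝ) - i by push_cast; ring]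
  have hVge : ∀ k, f (θ k) - Lstar ≤ V k := by
    intro k
    rw [hV' k]
    have : 0 ≤ ∑ i ∈ range D, ((D : ℝ) - i) * ξ0 / (2 * α * s)
      * ‖θ (k - (i : ℤ)) - θ (k - 1 - (i : ℤ))‖ ^ 2 := by
      refine Finset.sum_nonneg fun i hi => ?_
      have : (i : ℝ) < D := by exact_mod_cast Finset.mem_range.mp hi
      have : 0 < (D : ℝ) - i := by linarith
      positivity
    linarith
  have hVnn : ∀ k, 0 ≤ V k := fun k => le_trans (sub_nonneg.mpr (hinf (θ k))) (hVge k)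
  have hstep : ∀ k : ℤ, 1 ≤ k → V (k + 1) ≤ (1 - α * μ) * V k := by
    intro k hk
    set a : ℕ → ℝ := fun i => ‖θ (k + 1 - (i : ℤ)) - θ (k - (i : ℤ))‖ ^ 2 with ha
    set S : ℝ := ∑ i ∈ range D, ξ0 * a (i + 1) with hS
    have hS0 : 0 ≤ S := Finset.sum_nonneg fun i _ => by simp only [ha]; positivity
    have hSeq : ∑ d ∈ Finset.Icc 1 D, ξ d * ‖θ (k + 1 - (d : ℤ)) - θ (k - (d : ℤ))‖ ^ 2 = S := by
      rw [hS, Finset.range_eq_Ico, ← Finset.Ico_add_one_right_eq_Icc,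
        Finset.sum_Ico_eq_sum_range, Finset.range_eq_Ico]
      refine Finset.sum_congr (by simp) fun i hi => ?_
      have hi' : i < D := by simpa using hi
      rw [hξ (1 + i) (by simp; omega), add_comm 1 i]
    set e : EuclideanSpace ℝ (Fin n) := ∑ m, (gradient (Lf m) (θhat k m) - gradient (Lf m) (θ k))
      with he
    have hen : ‖e‖ ≤ Real.sqrt S / α := by
      have h1 : ∀ m ∈ (Finset.univ : Finset (Fin M)),
          ‖gradient (Lf m) (θhat k m) - gradient (Lf m) (θ k)‖ ≤ Real.sqrt S / (α * M) := by
        intro m _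
        by_cases hm : m ∈ Mc k
        · have := htrig k hk m hm
          rw [hSeq] at this
          refine abs_le_of_sq_le_sq' ?_ (by positivity) |>.2
          rw [div_pow, Real.sq_sqrt hS0, mul_pow]
          rw [one_div_mul_eq_div] at this
          exact this
        · rw [(hhat k hk m).2 hm, sub_self, norm_zero]
          positivity
      have := norm_sum_le_of_le _ h1
      rw [Finset.sum_const, Finset.card_univ, Fintype.card_fin, nsmul_eq_mul] at this
      refine this.trans (le_of_eq ?_)
      field_simp
    have hen2 : α ^ 2 * ‖e‖ ^ 2 ≤ S := by
      have h1 : α * ‖e‖ ≤ Real.sqrt S := by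
        rw [le_div_iff₀ hα0] at hen
        linarith
      have h2 := pow_le_pow_left₀ (by positivity) h1 2
      rw [Real.sq_sqrt hS0] at h2
      linarith
    set g := gradient f (θ k) with hg
    set v := θ (k + 1) - θ k with hv
    have hve : α • e = -(v + α • g) := by
      rw [hv, hupd k hk, he, Finset.sum_sub_distrib, ← hgrad, smul_sub, ← hg]
      abel
    have hid : α ^ 2 * ‖e‖ ^ 2 = ‖v‖ ^ 2 + 2 * (α * inner ℝ g v) + α ^ 2 * ‖g‖ ^ 2 := by
      have h1 : ‖α • e‖ ^ 2 = ‖v + α • g‖ ^ 2 := by rw [hve, norm_neg]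
      rw [norm_add_sq_real, norm_smul, norm_smul, inner_smul_right, real_inner_comm,
        Real.norm_of_nonneg hα0.le, mul_pow, mul_pow] at h1
      exact h1
    have hdesc := lag_descent f hfd L hsmooth (θ k) v
    rw [show θ k + v = θ (k + 1) by rw [hv]; abel, ← hg] at hdesc
    have hpl := hPL (θ k)
    change 2 * μ * (f (θ k) - Lstar) ≤ ‖g‖ ^ 2 at hpl
    have hsum := lag_sum_bound D ξ0 s α (α * μ) hs0 hα0 hξ0 (by positivity) hs2 hcD a
      (fun i => by simp only [ha]; positivity)
    have ha0 : a 0 = ‖v‖ ^ 2 := by simp [ha, hv]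
    rw [← hS, ha0] at hsum
    have hVk1 : V (k + 1) = f (θ (k + 1)) - Lstar +
        ∑ i ∈ range D, ((D : ℝ) - i) * ξ0 / (2 * α * s) * a i := by
      rw [hV']
      simp only [ha, add_sub_cancel_right]
    have hVk : V k = f (θ k) - Lstar +
        ∑ i ∈ range D, ((D : ℝ) - i) * ξ0 / (2 * α * s) * a (i + 1) := by
      rw [hV']
      congr 1
      refine Finset.sum_congr rfl fun i _ => ?_
      simp only [ha]
      rw [show (k + 1 - ((i + 1 : ℕ) : ℤ)) = k - (i : ℤ) by push_cast; ring,
        show (k - ((i + 1 : ℕ) : ℤ)) = k - 1 - (i : ℤ) by push_cast; ring]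
    rw [hVk1, hVk]
    have hdesc2 : f (θ (k + 1)) ≤ f (θ k) - α * μ * (f (θ k) - Lstar) + 1 / (2 * α) * S
        - s / (2 * α) * ‖v‖ ^ 2 := by
      have hin : inner ℝ g v = (α ^ 2 * ‖e‖ ^ 2) / (2 * α) - ‖v‖ ^ 2 / (2 * α)
          - α / 2 * ‖g‖ ^ 2 := by
        rw [hid]; field_simp; ring
      have hLe : L / 2 * ‖v‖ ^ 2 = ‖v‖ ^ 2 / (2 * α) - s / (2 * α) * ‖v‖ ^ 2 := by
        have : L = (1 - s) / α := by rw [← hLα]; field_simp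
        rw [this]; field_simp
      have h5 : (α ^ 2 * ‖e‖ ^ 2) / (2 * α) ≤ 1 / (2 * α) * S := by
        rw [one_div_mul_eq_div]
        gcongr
      have h6 := mul_le_mul_of_nonneg_left hpl (show 0 ≤ α / 2 by positivity)
      linarith
    linarith
  have hiter : ∀ j : ℕ, V (1 + j) ≤ (1 - α * μ) ^ j * V 1 := by
    intro j
    induction j with
    | zero => simp
    | succ j ih =>
      have h1 := hstep (1 + j) (by omega)
      have h2 := mul_le_mul_of_nonneg_left ih (show 0 ≤ 1 - α * μ by linarith)
      push_cast
      rw [← add_assoc]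
      refine h1.trans (h2.trans (le_of_eq ?_))
      ring
  intro ε hε0 hε1 K hK
  have hlog : 0 < Real.log (1 / ε) := Real.log_pos (by rw [lt_div_iff₀ hε0]; linarith)
  have hcoef : (L / μ) / (1 - s) = 1 / (α * μ) := by
    rw [← hLα]; field_simp
  rw [hcoef] at hK
  have hK1 : (0 : ℝ) < (K : ℝ) - 1 := lt_of_lt_of_le (by positivity) hK
  have hK2 : 1 ≤ K := by
    have : (1 : ℝ) < K := by linarith
    exact_mod_cast this.le
  obtain ⟨j, hj⟩ := Int.le.dest hK2
  have hKj : (K : ℝ) - 1 = j := by rw [← hj]; push_cast; ring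
  rw [hKj, ge_iff_le, one_div_mul_eq_div, div_le_iff₀ (by positivity), one_div, Real.log_inv] at hK
  have hpow : (1 - α * μ) ^ j ≤ ε := by
    have h1 : 1 - α * μ ≤ Real.exp (-(α * μ)) := Real.one_sub_le_exp_neg _
    have h2 := pow_le_pow_left₀ (by linarith) h1 j
    rw [← Real.exp_nat_mul] at h2
    refine h2.trans ?_
    rw [← Real.le_log_iff_exp_le hε0]
    linarith
  have hfin := hiter j
  rw [hj] at hfin
  exact (hVge K).trans (hfin.trans (mul_le_mul_of_nonneg_right hpow (hVnn 1)))
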